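/- For every integer n ≥ 5 there exist points v₁, …, vₙ ∈ ℝ² in strictly convex position (listed in counterclockwise order) such that every interior angle of the convex polygon P = conv{v₁, …, vₙ} is strictly greater than π/2, and there exists an external watchman route for {P} whose length is strictly less than the perimeter ∑_{i=1}^{n} ‖v_{i+1} − v_i‖ (indices mod n) of P. In particular, the perimeter of P is not a shortest external watchman route for P. -/

import Mathlib

/-!
If a closed convex set `K` lies in a triangle `abc` and contains the corner `c`, then the segment
`ab`, walked back and forth, is an external watchman route for `K`. Indeed, let `q` be a boundary
point of `K` and `f` a functional that is maximal on `K` at `q`. Any point where `f` is at least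
`f q` sees `q`. If neither `a` nor `b` is such a point, then `f` is smaller than `f q` on all of
`ab` and at most `f q` at `c`, so `q = c`, which `b` sees along the side `bc`.

By the triangle inequality `2 |ab|` is less than the perimeter of `abc`. It therefore suffices to
inscribe in a triangle with an obtuse angle at `c` a polygon that contains `c` and nearly fills the
triangle, the sharp corners `a` and `b` being cut off. Here `a`, `b` are `(∓ 44, 0)` and `c` is
`(0, 33)`. The other vertices of the polygon lie on the graph of a strictly convex function that is
nearly flat up to abscissa `± 39` and then rises steeply to the sides of the triangle at abscissa
`± 40`. Every such polygon has perimeter at least `80 + 50 + 50 > 176 = 2 |ab|`.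
-/

open Set Metric ENNReal

noncomputable section

abbrev E2 := EuclideanSpace ℝ (Fin 2)

/-- The planar cross product (signed area form). -/
def cross (a b : E2) : ℝ := a 0 * b 1 - a 1 * b 0

/-! ### Visibility of convex obstacles -/

section Visibility

variable {E : Type*} [AddCommGroup E] [Module ℝ E]

lemma eq_of_mem_convexHull_insert_of_forall_lt {S : Set E} {c q : E}
    (hq : q ∈ convexHull ℝ (insert c S)) {f : Module.Dual ℝ E}
    (hfS : ∀ s ∈ S, f s < f q) (hfc : f c ≤ f q) : q = c := by
  obtain rfl | hS := S.eq_empty_or_nonempty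
  · simpa using hq
  rw [convexHull_insert hS, mem_convexJoin] at hq
  obtain ⟨c, rfl, y, hy, α, β, hα, hβ, hαβ, hq⟩ := hq
  have hfy : f y < f q := convexHull_min (t := {x | f x < f q}) hfS
    (convex_halfSpace_lt f.isLinear (f q)) hy
  have hfq : α * f c + β * f y = f q := by simp [← hq]
  obtain rfl : α = 1 - β := by linarith
  obtain rfl | hβ := hβ.eq_or_lt
  · simp [← hq]
  · nlinarith

variable [TopologicalSpace E]

/-- Mutual visibility of `p` and `q` in the presence of the obstacle `K`. In contrast to Mathlib's
`IsVisible`, the endpoints are not allowed to lie in the interior of the obstacle. -/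
def MutuallyVisible (K : Set E) (p q : E) : Prop :=
  Disjoint (segment ℝ p q) (interior K)

/-- `γ`, restricted to `[0, 1]`, is an external watchman route for the single obstacle `K`. -/
structure IsExternalWatchmanRoute (K : Set E) (γ : ℝ → E) : Prop where
  continuousOn : ContinuousOn γ (Icc 0 1)
  closed : γ 0 = γ 1
  disjoint : Disjoint (γ '' Icc 0 1) (interior K)
  visible : ∀ q ∈ frontier K, ∃ t ∈ Icc (0 : ℝ) 1, MutuallyVisible K (γ t) q

variable [IsTopologicalAddGroup E] [ContinuousSMul ℝ E]

lemma lt_of_mem_interior_of_forall_le {K : Set E} {f : StrongDual ℝ E} (hf : f ≠ 0) {m : ℝ}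
    (hK : ∀ x ∈ K, f x ≤ m) {x : E} (hx : x ∈ interior K) : f x < m := by
  have hx' : x ∈ interior (f ⁻¹' Iic m) := interior_mono hK hx
  simpa using (f.isOpenMap_of_ne_zero hf).interior_preimage_subset_preimage_interior hx'

lemma MutuallyVisible.of_forall_le {K : Set E} {f : StrongDual ℝ E} (hf : f ≠ 0) {m : ℝ}
    (hK : ∀ x ∈ K, f x ≤ m) {p q : E} (hp : m ≤ f p) (hq : m ≤ f q) : MutuallyVisible K p q := by
  refine Set.disjoint_left.mpr fun x hx hxK => (lt_of_mem_interior_of_forall_le hf hK hxK).not_ge ?_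
  exact (convex_halfSpace_ge f.toLinearMap.isLinear m).segment_subset hp hq hx

theorem exists_mutuallyVisible_of_subset_convexHull_insert {K S : Set E} (hK : Convex ℝ K) {c : E}
    (hcK : c ∈ K) (hKS : K ⊆ convexHull ℝ (insert c S)) (hc : ∃ s ∈ S, MutuallyVisible K s c)
    {q : E} (hqK : q ∈ K) (hq : q ∉ interior K) : ∃ s ∈ S, MutuallyVisible K s q := by
  obtain ⟨s₀, hs₀, hs₀c⟩ := hc
  obtain hempty | hne := (interior K).eq_empty_or_nonempty
  · exact ⟨s₀, hs₀, by simp [MutuallyVisible, hempty]⟩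
  obtain ⟨f, hf, hfK⟩ := geometric_hahn_banach_of_nonempty_interior_point hK hq hne
  by_cases! hS : ∃ s ∈ S, f q ≤ f s
  · obtain ⟨s, hs, hqs⟩ := hS
    exact ⟨s, hs, .of_forall_le hf hfK hqs le_rfl⟩
  · obtain rfl := eq_of_mem_convexHull_insert_of_forall_lt (f := f.toLinearMap)
      (hKS hqK) hS (hfK c hcK)
    exact ⟨s₀, hs₀, hs₀c⟩

end Visibility

/-! ### Walking along a segment and back -/

section BackAndForth

variable {E : Type*} [NormedAddCommGroup E] [NormedSpace ℝ E]

/-- The tour that walks, during `[0, 1]`, along the segment from `a` to `b` and back to `a`. -/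
def backAndForth (a b : E) (t : ℝ) : E :=
  AffineMap.lineMap a b (1 - |2 * t - 1|)

lemma lipschitzWith_backAndForth (a b : E) :
    LipschitzWith (nndist a b * 2) (backAndForth a b) := by
  have hfold : LipschitzWith 2 fun t : ℝ => 1 - |2 * t - 1| := by
    refine LipschitzWith.of_dist_le_mul fun s t => ?_
    calc |1 - |2 * s - 1| - (1 - |2 * t - 1|)|
        = |(|2 * t - 1| - |2 * s - 1|)| := by congr 1; ring
      _ ≤ |2 * t - 1 - (2 * s - 1)| := abs_abs_sub_abs_le_abs_sub _ _
      _ = |2 * (t - s)| := by congr 1; ring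
      _ = 2 * |s - t| := by rw [abs_mul, abs_two, abs_sub_comm]
  exact (lipschitzWith_lineMap a b).comp hfold

lemma eVariationOn_backAndForth_le (a b : E) :
    eVariationOn (backAndForth a b) (Icc 0 1) ≤ ENNReal.ofReal (2 * dist a b) := by
  have h := (lipschitzWith_backAndForth a b).lipschitzOnWith.comp_eVariationOn_le
    (g := id) (mapsTo_univ _ (Icc (0 : ℝ) 1))
  rw [Function.comp_id, eVariationOn_id_Icc, sub_zero, ENNReal.ofReal_one, mul_one] at h
  refine h.trans_eq ?_
  rw [← NNReal.coe_ofNat, ← coe_nndist, ← NNReal.coe_mul, ENNReal.ofReal_coe_nnreal, mul_comm]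

lemma backAndForth_mem_segment (a b : E) {t : ℝ} (ht : t ∈ Icc (0 : ℝ) 1) :
    backAndForth a b t ∈ segment ℝ a b := by
  rw [segment_eq_image_lineMap]
  refine mem_image_of_mem _ ⟨sub_nonneg.mpr (abs_le.mpr ⟨?_, ?_⟩), sub_le_self 1 (abs_nonneg _)⟩ <;>
    linarith [ht.1, ht.2]

lemma isExternalWatchmanRoute_backAndForth {K : Set E} {a b : E} (hab : MutuallyVisible K a b)
    (hsee : ∀ q ∈ frontier K, ∃ s ∈ ({a, b} : Set E), MutuallyVisible K s q) :
    IsExternalWatchmanRoute K (backAndForth a b) where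
  continuousOn := (lipschitzWith_backAndForth a b).continuous.continuousOn
  closed := by norm_num [backAndForth]
  disjoint := hab.mono_left (image_subset_iff.mpr fun _ => backAndForth_mem_segment a b)
  visible q hq := by
    obtain ⟨s, rfl | rfl, hs⟩ := hsee q hq
    · exact ⟨0, by simp, by simpa [backAndForth] using hs⟩
    · exact ⟨1 / 2, by norm_num, by simpa [backAndForth] using hs⟩

end BackAndForth

/-! ### Planar geometry -/

section Plane

/-- The cross product with a fixed vector as a linear functional. -/
def crossDual (u : E2) : StrongDual ℝ E2 :=
  u 0 • EuclideanSpace.proj 1 - u 1 • EuclideanSpace.proj 0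

@[simp]
lemma crossDual_apply (u x : E2) : crossDual u x = cross u x := by
  simp [crossDual, cross]

lemma cross_sub_right (u x y : E2) : cross u (x - y) = cross u x - cross u y := by
  simp only [← crossDual_apply, map_sub]

lemma cross_sub_sub_rotate (a b c : E2) : cross (b - a) (c - b) = cross (c - b) (a - c) := by
  simp only [cross, PiLp.sub_apply]
  ring

lemma cross_sub_sub_eq (a b c : E2) : cross (b - a) (c - b) = cross (b - a) (c - a) := by
  simp only [cross, PiLp.sub_apply]
  ring

lemma cross_sub_nonneg_of_mem_convexHull {S : Set E2} {u p : E2}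
    (hS : ∀ s ∈ S, 0 ≤ cross u (s - p)) {x : E2} (hx : x ∈ convexHull ℝ S) :
    0 ≤ cross u (x - p) := by
  simp_rw [cross_sub_right, sub_nonneg, ← crossDual_apply] at hS ⊢
  exact convexHull_min (t := {y | crossDual u p ≤ crossDual u y}) hS
    (convex_halfSpace_ge (crossDual u).toLinearMap.isLinear _) hx

lemma mutuallyVisible_of_subset_triangle {K : Set E2} {a b c : E2}
    (habc : 0 < cross (b - a) (c - b)) (hK : K ⊆ convexHull ℝ {a, b, c}) :
    MutuallyVisible K a b := by
  rw [cross_sub_sub_eq] at habc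
  have hne : -crossDual (b - a) ≠ 0 := fun h => habc.ne' <| by
    simpa using DFunLike.congr_fun h (c - a)
  have hleft : ∀ x ∈ K, 0 ≤ cross (b - a) (x - a) := fun x hx => by
    refine cross_sub_nonneg_of_mem_convexHull ?_ (hK hx)
    rintro s (rfl | rfl | rfl)
    exacts [by simp [cross], by simp [cross, mul_comm], habc.le]
  have hb : cross (b - a) b = cross (b - a) a := by
    simp only [cross, PiLp.sub_apply]
    ring
  refine .of_forall_le hne (m := -cross (b - a) a) (fun x hx => ?_) ?_ ?_
  · simpa [cross_sub_right] using hleft x hx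
  · simp
  · simp [hb]

theorem isExternalWatchmanRoute_of_subset_triangle {K : Set E2} (hconv : Convex ℝ K)
    (hclosed : IsClosed K) {a b c : E2} (habc : 0 < cross (b - a) (c - b)) (hc : c ∈ K)
    (hK : K ⊆ convexHull ℝ {a, b, c}) : IsExternalWatchmanRoute K (backAndForth a b) := by
  have hrot : ({a, b, c} : Set E2) = {b, c, a} := by
    rw [insert_comm, pair_comm a c]
  have hrot' : ({a, b, c} : Set E2) = {c, a, b} := by
    rw [hrot, insert_comm, pair_comm b a]
  have hbc : MutuallyVisible K b c :=
    mutuallyVisible_of_subset_triangle (cross_sub_sub_rotate a b c ▸ habc) (hrot ▸ hK)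
  refine isExternalWatchmanRoute_backAndForth (mutuallyVisible_of_subset_triangle habc hK)
    fun q hq => ?_
  exact exists_mutuallyVisible_of_subset_convexHull_insert hconv hc (hrot' ▸ hK)
    ⟨b, by simp, hbc⟩ (hclosed.frontier_subset hq) hq.2

lemma mem_convexHull_triangle {a b c x : E2} (habc : 0 < cross (b - a) (c - b))
    (hab : 0 ≤ cross (b - a) (x - a)) (hbc : 0 ≤ cross (c - b) (x - b))
    (hca : 0 ≤ cross (a - c) (x - c)) : x ∈ convexHull ℝ {a, b, c} := by
  set D := cross (b - a) (c - b) with hD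
  -- The barycentric coordinates of `x` are ratios of signed areas.
  have hx : x = (cross (c - b) (x - b) / D) • a + (cross (a - c) (x - c) / D) • b
      + (cross (b - a) (x - a) / D) • c := by
    have hD0 := habc.ne'
    ext i
    fin_cases i <;>
    · simp only [PiLp.add_apply, PiLp.smul_apply, smul_eq_mul]
      field_simp
      simp only [hD, cross, PiLp.sub_apply, Fin.zero_eta, Fin.mk_one]
      ring
  have hsum : cross (c - b) (x - b) / D + cross (a - c) (x - c) / D
      + cross (b - a) (x - a) / D = 1 := by
    field_simp
    simp only [hD, cross, PiLp.sub_apply]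
    ring
  have hmem := (convex_convexHull ℝ {a, b, c}).sum_mem (t := Finset.univ)
    (w := ![cross (c - b) (x - b) / D, cross (a - c) (x - c) / D, cross (b - a) (x - a) / D])
    (z := ![a, b, c])
    (fun i _ => by
      fin_cases i
      exacts [div_nonneg hbc habc.le, div_nonneg hca habc.le, div_nonneg hab habc.le])
    (by simpa [Fin.sum_univ_three] using hsum)
    (fun i _ => subset_convexHull ℝ _ (by fin_cases i <;> simp))
  rw [hx]
  simpa [Fin.sum_univ_three] using hmem

end Plane

lemma pi_div_two_lt_angle_of_inner_neg {V P : Type*} [NormedAddCommGroup V] [InnerProductSpace ℝ V]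
    [MetricSpace P] [NormedAddTorsor V P] {p q r : P} (h : inner ℝ (p -ᵥ q) (r -ᵥ q) < 0) :
    Real.pi / 2 < EuclideanGeometry.angle p q r := by
  by_contra! hle
  have hcos := Real.cos_nonneg_of_neg_pi_div_two_le_of_le
    (by linarith [Real.pi_pos, EuclideanGeometry.angle_nonneg p q r]) hle
  have hinner := InnerProductGeometry.cos_angle_mul_norm_mul_norm (p -ᵥ q) (r -ᵥ q)
  exact h.not_ge (hinner ▸ mul_nonneg hcos (by positivity))

lemma pi_div_two_lt_angle_of_coord {p q r : E2}
    (h : (p 0 - q 0) * (r 0 - q 0) + (p 1 - q 1) * (r 1 - q 1) < 0) :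
    Real.pi / 2 < EuclideanGeometry.angle p q r := by
  apply pi_div_two_lt_angle_of_inner_neg
  simpa [PiLp.inner_apply, Fin.sum_univ_two, mul_comm] using h

/-! ### Convex polygons -/

section Polygon

/-- The points `v i` are the vertices of a strictly convex polygon in counterclockwise order:
every triple of indices in cyclic order is mapped to a positively oriented triangle. -/
def IsCcwPolygon {n : ℕ} (v : Fin n → E2) : Prop :=
  ∀ i j k, sbtw i j k → 0 < cross (v j - v i) (v k - v j)

lemma isCcwPolygon_of_forall_lt {n : ℕ} {v : Fin n → E2}
    (hv : ∀ i j k, i < j → j < k → 0 < cross (v j - v i) (v k - v j)) : IsCcwPolygon v := by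
  rintro i j k (⟨hij, hjk⟩ | ⟨hjk, hki⟩ | ⟨hki, hij⟩)
  · exact hv i j k hij hjk
  · exact cross_sub_sub_rotate (v i) (v j) (v k) ▸ hv j k i hjk hki
  · exact cross_sub_sub_rotate (v k) (v i) (v j) ▸ hv k i j hki hij

lemma fin_add_two {n : ℕ} (i : Fin (n + 2)) : i + 2 = i + 1 + 1 := by
  rw [add_assoc]
  congr 1

lemma sbtw_add_one_add_two {n : ℕ} (i : Fin (n + 3)) : sbtw i (i + 1) (i + 2) := by
  simp only [Fin.sbtw_iff, fin_add_two, Fin.lt_def, Fin.val_add_one, Fin.ext_iff, Fin.val_last]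
  grind

lemma sbtw_add_two_of_ne {n : ℕ} {i j : Fin (n + 3)} (h₀ : j ≠ i) (h₁ : j ≠ i + 1)
    (h₂ : j ≠ i + 2) : sbtw i (i + 2) j := by
  simp only [fin_add_two, ne_eq, Fin.sbtw_iff, Fin.lt_def, Fin.val_add_one, Fin.ext_iff,
    Fin.val_last] at h₀ h₁ h₂ ⊢
  grind

lemma IsCcwPolygon.notMem_convexHull {n : ℕ} {v : Fin (n + 3) → E2} (hv : IsCcwPolygon v)
    (i : Fin (n + 3)) : v i ∉ convexHull ℝ (v '' {j | j ≠ i}) := by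
  obtain ⟨i, rfl⟩ : ∃ i', i' + 1 = i := ⟨i - 1, sub_add_cancel i 1⟩
  -- The diagonal from `v i` to `v (i + 2)` cuts off `v (i + 1)`.
  have hcut : cross (v (i + 2) - v i) (v (i + 1) - v i) < 0 := by
    have h := hv i (i + 1) (i + 2) (sbtw_add_one_add_two i)
    simp only [cross, PiLp.sub_apply] at h ⊢
    linarith
  refine fun hmem => hcut.not_ge (cross_sub_nonneg_of_mem_convexHull ?_ hmem)
  rintro _ ⟨j, hj, rfl⟩
  obtain rfl | h₀ := eq_or_ne j i
  · simp [cross]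
  obtain rfl | h₂ := eq_or_ne j (i + 2)
  · simp [cross, mul_comm]
  rw [← cross_sub_sub_eq]
  exact (hv i (i + 2) j (sbtw_add_two_of_ne h₀ hj h₂)).le

lemma forall_consecutive_triple {α : Type*} {n : ℕ} {v : ℕ → α} {p : α → α → α → Prop}
    (h : ∀ i < n, p (v i) (v (i + 1)) (v (i + 2))) (hlast : p (v n) (v (n + 1)) (v 0))
    (hfirst : p (v (n + 1)) (v 0) (v 1)) (i : Fin (n + 2)) :
    p (v i) (v ↑(i + 1)) (v ↑(i + 2)) := by
  simp only [fin_add_two, Fin.val_add_one, Fin.ext_iff, Fin.val_last]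
  obtain hi | hi | hi : (i : ℕ) < n ∨ (i : ℕ) = n ∨ (i : ℕ) = n + 1 := by omega
  · simpa [hi.ne, (hi.trans n.lt_succ_self).ne] using h i hi
  · simpa [hi] using hlast
  · simpa [hi] using hfirst

lemma dist_add_dist_add_dist_le_sum {α : Type*} [PseudoMetricSpace α] (v : ℕ → α) (n : ℕ) :
    dist (v 0) (v n) + dist (v n) (v (n + 1)) + dist (v (n + 1)) (v 0)
      ≤ ∑ i : Fin (n + 2), dist (v i) (v ↑(i + 1)) := by
  have hchain : ∑ i : Fin (n + 1), dist (v i.castSucc) (v ↑(i.castSucc + 1))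
      = ∑ i ∈ Finset.range (n + 1), dist (v i) (v (i + 1)) := by
    simp [Finset.sum_range, Fin.coeSucc_eq_succ]
  rw [Fin.sum_univ_castSucc, hchain, Finset.sum_range_succ]
  simpa using dist_le_range_sum_dist v n

end Polygon

/-! ### Polygons with a convex graph as lower boundary -/

section Graph

/-- The point of the graph of `g` with abscissa `x`. -/
def graphPt (g : ℝ → ℝ) (x : ℝ) : E2 := !₂[x, g x]

@[simp] lemma graphPt_zero (g : ℝ → ℝ) (x : ℝ) : graphPt g x 0 = x := rfl

@[simp] lemma graphPt_one (g : ℝ → ℝ) (x : ℝ) : graphPt g x 1 = g x := rfl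

lemma cross_graphPt_pos {s : Set ℝ} {g : ℝ → ℝ} (hg : StrictConvexOn ℝ s g) {x y z : ℝ}
    (hx : x ∈ s) (hz : z ∈ s) (hxy : x < y) (hyz : y < z) :
    0 < cross (graphPt g y - graphPt g x) (graphPt g z - graphPt g y) := by
  have hslope := hg.slope_strict_mono_adjacent hx hz hxy hyz
  rw [div_lt_div_iff₀ (sub_pos.mpr hxy) (sub_pos.mpr hyz)] at hslope
  simp only [cross, PiLp.sub_apply, graphPt_zero, graphPt_one]
  linarith

lemma cross_graphPt_pos_of_above {s : Set ℝ} {g : ℝ → ℝ} (hg : ConvexOn ℝ s g) {x y : ℝ}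
    (hx : x ∈ s) (hy : y ∈ s) (hxy : x < y) {p : E2} (hps : p 0 ∈ s) (hpx : g x < p 1)
    (hpy : g y < p 1) (hp : g (p 0) < p 1) :
    0 < cross (graphPt g y - graphPt g x) (p - graphPt g y) := by
  simp only [cross, PiLp.sub_apply, graphPt_zero, graphPt_one]
  obtain hp₀ | hp₀ := lt_or_ge (p 0) x
  · have hslope := hg.slope_mono_adjacent hps hy hp₀ hxy
    rw [div_le_div_iff₀ (sub_pos.mpr hp₀) (sub_pos.mpr hxy)] at hslope
    nlinarith
  obtain hp₁ | hp₁ := le_or_gt (p 0) y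
  · have hcoord : (y - x) * (p 1 - g y) - (g y - g x) * (p 0 - y)
        = (y - p 0) * (p 1 - g x) + (p 0 - x) * (p 1 - g y) := by ring
    rw [hcoord]
    obtain hp₀ | hp₀ := hp₀.eq_or_lt
    · rw [← hp₀, sub_self, zero_mul, add_zero]
      exact mul_pos (sub_pos.mpr hxy) (sub_pos.mpr hpx)
    · exact add_pos_of_nonneg_of_pos (mul_nonneg (sub_nonneg.mpr hp₁) (sub_pos.mpr hpx).le)
        (mul_pos (sub_pos.mpr hp₀) (sub_pos.mpr hpy))
  · have hslope := hg.slope_mono_adjacent hx hps hxy hp₁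
    rw [div_le_div_iff₀ (sub_pos.mpr hxy) (sub_pos.mpr hp₁)] at hslope
    nlinarith

end Graph


/-! ### An obtuse-angled polygon nearly filling a triangle -/

section Construction

/-- The profile of the lower boundary: a shallow parabola with steep walls added beyond abscissa
`± 39`. -/
def basin (x : ℝ) : ℝ := x ^ 2 / 1600 + 2 * max 0 (|x| - 39)

lemma strictConvexOn_basin : StrictConvexOn ℝ univ basin := by
  have hparabola : StrictConvexOn ℝ univ fun x : ℝ => x ^ 2 / 1600 := by
    refine ⟨convex_univ, fun x hx y hy hxy a b ha hb hab => ?_⟩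
    have h := (even_two.strictConvexOn_pow two_ne_zero).2 hx hy hxy ha hb hab
    simp only [smul_eq_mul] at h ⊢
    linarith
  have habs : ConvexOn ℝ univ fun x : ℝ => |x| - 39 :=
    convexOn_univ_norm.sub (concaveOn_const 39 convex_univ)
  have hwalls : ConvexOn ℝ univ fun x : ℝ => 2 * max 0 (|x| - 39) :=
    ((convexOn_const 0 convex_univ).sup habs).smul zero_le_two
  exact hparabola.add_convexOn hwalls

lemma basin_nonneg (x : ℝ) : 0 ≤ basin x := by
  unfold basin
  positivity

lemma basin_le_three {x : ℝ} (hx : |x| ≤ 40) : basin x ≤ 3 := by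
  have hsq : x ^ 2 ≤ 40 ^ 2 := sq_le_sq' (abs_le.mp hx).1 (abs_le.mp hx).2
  have hmax : max 0 (|x| - 39) ≤ 1 := max_le zero_le_one (by linarith)
  unfold basin
  linarith

lemma basin_of_abs_le {x : ℝ} (hx : |x| ≤ 39) : basin x = x ^ 2 / 1600 := by
  simp [basin, hx]

lemma basin_forty : basin 40 = 3 := by
  norm_num [basin]

lemma basin_neg (x : ℝ) : basin (-x) = basin x := by
  simp [basin]

/-- The abscissas of the vertices on the graph: `k + 2` equidistant points of `[-39, 39]`, with
indices from `1` to `k + 2`, between `-40` and `40`. -/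
def abscissa (k i : ℕ) : ℝ :=
  if i = 0 then -40 else if i ≤ k + 2 then -39 + 78 * ((i - 1) / (k + 1)) else 40

lemma abscissa_zero (k : ℕ) : abscissa k 0 = -40 := rfl

lemma abscissa_one (k : ℕ) : abscissa k 1 = -39 := by
  simp [abscissa]

lemma abscissa_add_three (k : ℕ) : abscissa k (k + 3) = 40 := by
  simp [abscissa]

lemma abscissa_of_le {k i : ℕ} (hi₁ : 1 ≤ i) (hi₂ : i ≤ k + 2) :
    abscissa k i = -39 + 78 * ((i - 1) / (k + 1)) := by
  rw [abscissa, if_neg (by omega), if_pos hi₂]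

lemma abscissa_add_two (k : ℕ) : abscissa k (k + 2) = 39 := by
  rw [abscissa_of_le (by omega) le_rfl]
  push_cast
  field_simp
  ring

lemma abscissa_mem_Icc {k i : ℕ} (hi₁ : 1 ≤ i) (hi₂ : i ≤ k + 2) :
    abscissa k i ∈ Icc (-39) 39 := by
  have h₁ : (1 : ℝ) ≤ i := by exact_mod_cast hi₁
  have h₂ : (i : ℝ) ≤ k + 2 := by exact_mod_cast hi₂
  have hfrac : ((i : ℝ) - 1) / (k + 1) ∈ Icc 0 1 :=
    ⟨div_nonneg (by linarith) (by positivity), div_le_one_of_le₀ (by linarith) (by positivity)⟩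
  rw [abscissa_of_le hi₁ hi₂]
  constructor <;> linarith [hfrac.1, hfrac.2]

lemma abscissa_lt_abscissa {k i j : ℕ} (hij : i < j) (hj : j ≤ k + 3) :
    abscissa k i < abscissa k j := by
  obtain rfl | hi := i.eq_zero_or_pos <;> obtain rfl | hj := hj.eq_or_lt
  · norm_num [abscissa_zero, abscissa_add_three]
  · linarith [abscissa_zero k, (abscissa_mem_Icc (k := k) hij (by omega)).1]
  · linarith [abscissa_add_three k, (abscissa_mem_Icc (k := k) hi (by omega)).2]
  rw [abscissa_of_le hi (by omega), abscissa_of_le (by omega) (by omega)]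
  have : (i : ℝ) < j := by exact_mod_cast hij
  gcongr

lemma abs_abscissa_le (k i : ℕ) : |abscissa k i| ≤ 40 := by
  obtain rfl | hi := i.eq_zero_or_pos
  · norm_num [abscissa_zero]
  obtain hi' | hi' := le_or_gt i (k + 2)
  · have h := abscissa_mem_Icc hi hi'
    exact abs_le.mpr ⟨by linarith [h.1], by linarith [h.2]⟩
  · rw [abscissa, if_neg (by omega), if_neg (by omega)]
    norm_num

/-- The common upper vertex of the polygon and of the triangle around it. -/
def apex : E2 := !₂[0, 33]

@[simp] lemma apex_zero : apex 0 = 0 := rfl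

@[simp] lemma apex_one : apex 1 = 33 := rfl

/-- The vertices of the polygon in counterclockwise order, the apex being the last one. -/
def vertex (k i : ℕ) : E2 :=
  if i = k + 4 then apex else graphPt basin (abscissa k i)

lemma vertex_add_four (k : ℕ) : vertex k (k + 4) = apex := if_pos rfl

lemma vertex_of_le {k i : ℕ} (hi : i ≤ k + 3) : vertex k i = graphPt basin (abscissa k i) :=
  if_neg (by omega)

lemma isCcwPolygon_vertex (k : ℕ) : IsCcwPolygon fun i : Fin (k + 5) => vertex k i := by
  refine isCcwPolygon_of_forall_lt fun i j l (hij : (i : ℕ) < j) (hjl : (j : ℕ) < l) => ?_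
  simp only [vertex_of_le (show (i : ℕ) ≤ k + 3 by omega),
    vertex_of_le (show (j : ℕ) ≤ k + 3 by omega)]
  obtain hl | hl : (l : ℕ) ≤ k + 3 ∨ (l : ℕ) = k + 4 := by omega
  · rw [vertex_of_le hl]
    exact cross_graphPt_pos strictConvexOn_basin (mem_univ _) (mem_univ _)
      (abscissa_lt_abscissa hij (by omega)) (abscissa_lt_abscissa hjl hl)
  · have hlow (m : ℕ) : basin (abscissa k m) < apex 1 :=
      (basin_le_three (abs_abscissa_le k m)).trans_lt (by norm_num)
    rw [hl, vertex_add_four]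
    exact cross_graphPt_pos_of_above strictConvexOn_basin.convexOn (mem_univ _) (mem_univ _)
      (abscissa_lt_abscissa hij (by omega)) (mem_univ _) (hlow i) (hlow j) (by norm_num [basin])

lemma pi_div_two_lt_angle_graphPt_of_forall_abs_le {x y z : ℝ} (hx : -39 ≤ x) (hxy : x < y)
    (hyz : y < z) (hz : z ≤ 39) :
    Real.pi / 2 < EuclideanGeometry.angle (graphPt basin x) (graphPt basin y)
      (graphPt basin z) := by
  apply pi_div_two_lt_angle_of_coord
  simp only [graphPt_zero, graphPt_one]
  rw [basin_of_abs_le (x := x) (abs_le.mpr ⟨by linarith, by linarith⟩),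
    basin_of_abs_le (x := y) (abs_le.mpr ⟨by linarith, by linarith⟩),
    basin_of_abs_le (x := z) (abs_le.mpr ⟨by linarith, by linarith⟩)]
  have hslopes : 0 < 1 + (x + y) / 1600 * ((z + y) / 1600) := by nlinarith
  calc (x - y) * (z - y) + (x ^ 2 / 1600 - y ^ 2 / 1600) * (z ^ 2 / 1600 - y ^ 2 / 1600)
      = -((y - x) * (z - y) * (1 + (x + y) / 1600 * ((z + y) / 1600))) := by ring
    _ < 0 := neg_lt_zero.mpr (mul_pos (mul_pos (sub_pos.mpr hxy) (sub_pos.mpr hyz)) hslopes)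

lemma pi_div_two_lt_angle_graphPt_right {x : ℝ} (hx₁ : -39 ≤ x) (hx₂ : x < 39) :
    Real.pi / 2 < EuclideanGeometry.angle (graphPt basin x) (graphPt basin 39)
      (graphPt basin 40) := by
  apply pi_div_two_lt_angle_of_coord
  simp only [graphPt_zero, graphPt_one]
  rw [basin_of_abs_le (abs_le.mpr ⟨hx₁, hx₂.le⟩), basin_of_abs_le (by norm_num), basin_forty]
  nlinarith

lemma pi_div_two_lt_angle_graphPt_left {x : ℝ} (hx₁ : -39 < x) (hx₂ : x ≤ 39) :
    Real.pi / 2 < EuclideanGeometry.angle (graphPt basin (-40)) (graphPt basin (-39))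
      (graphPt basin x) := by
  apply pi_div_two_lt_angle_of_coord
  simp only [graphPt_zero, graphPt_one]
  rw [basin_of_abs_le (x := x) (abs_le.mpr ⟨hx₁.le, hx₂⟩), basin_neg, basin_neg, basin_forty,
    basin_of_abs_le (by norm_num)]
  nlinarith

lemma pi_div_two_lt_angle_vertex (k : ℕ) (i : Fin (k + 5)) :
    Real.pi / 2 < EuclideanGeometry.angle (vertex k i) (vertex k ↑(i + 1))
      (vertex k ↑(i + 2)) := by
  have h39 : basin 39 = 39 ^ 2 / 1600 := basin_of_abs_le (by norm_num)
  refine forall_consecutive_triple (n := k + 3) (v := vertex k)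
    (p := fun a b c => Real.pi / 2 < EuclideanGeometry.angle a b c) (fun j hj => ?_) ?_ ?_ i
  · rw [vertex_of_le (show j ≤ k + 3 by omega), vertex_of_le (show j + 1 ≤ k + 3 by omega)]
    obtain rfl | hj' : j = k + 2 ∨ j + 2 ≤ k + 3 := by omega
    · rw [abscissa_add_two, abscissa_add_three, vertex_add_four]
      apply pi_div_two_lt_angle_of_coord
      norm_num [basin_forty, h39]
    have hlt := abscissa_lt_abscissa (k := k) (show j + 1 < j + 2 by omega) hj'
    have hlt' := abscissa_lt_abscissa (k := k) (show j < j + 1 by omega) (by omega)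
    rw [vertex_of_le hj']
    obtain rfl | hj₀ := j.eq_zero_or_pos
    · rw [zero_add, abscissa_zero, abscissa_one] at *
      exact pi_div_two_lt_angle_graphPt_left hlt (abscissa_mem_Icc (by omega) (by omega)).2
    have hmem := abscissa_mem_Icc (k := k) hj₀ (by omega)
    obtain rfl | hj₁ : j = k + 1 ∨ j + 2 ≤ k + 2 := by omega
    · rw [abscissa_add_two, abscissa_add_three] at *
      exact pi_div_two_lt_angle_graphPt_right hmem.1 hlt'
    · exact pi_div_two_lt_angle_graphPt_of_forall_abs_le hmem.1 hlt' hlt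
        (abscissa_mem_Icc (by omega) hj₁).2
  · rw [vertex_of_le le_rfl, vertex_add_four, vertex_of_le (Nat.zero_le _), abscissa_zero,
      abscissa_add_three]
    apply pi_div_two_lt_angle_of_coord
    norm_num [basin_forty, basin_neg]
  · rw [vertex_add_four, vertex_of_le (Nat.zero_le _), vertex_of_le (by omega), abscissa_zero,
      abscissa_one]
    apply pi_div_two_lt_angle_of_coord
    norm_num [basin_forty, basin_neg, h39]

/-- The left corner of the triangle around the polygon. -/
def leftCorner : E2 := !₂[-44, 0]

/-- The right corner of the triangle around the polygon. -/
def rightCorner : E2 := !₂[44, 0]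

lemma cross_corners_pos : 0 < cross (rightCorner - leftCorner) (apex - rightCorner) := by
  norm_num [cross, leftCorner, rightCorner]

lemma vertex_mem_triangle (k i : ℕ) :
    vertex k i ∈ convexHull ℝ {leftCorner, rightCorner, apex} := by
  by_cases hi : i = k + 4
  · rw [hi, vertex_add_four]
    exact subset_convexHull ℝ _ (by simp)
  have habs := abs_abscissa_le k i
  obtain ⟨hl, hr⟩ := abs_le.mp habs
  have hlow := basin_le_three habs
  have hnonneg := basin_nonneg (abscissa k i)
  rw [vertex, if_neg hi]
  apply mem_convexHull_triangle cross_corners_pos <;>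
    norm_num [cross, leftCorner, rightCorner] <;> linarith

lemma convexHull_vertex_subset (k : ℕ) :
    convexHull ℝ (range fun i : Fin (k + 5) => vertex k i)
      ⊆ convexHull ℝ {leftCorner, rightCorner, apex} :=
  convexHull_min (range_subset_iff.mpr fun i => vertex_mem_triangle k i) (convex_convexHull ℝ _)

theorem isExternalWatchmanRoute_vertex (k : ℕ) :
    IsExternalWatchmanRoute (convexHull ℝ (range fun i : Fin (k + 5) => vertex k i))
      (backAndForth leftCorner rightCorner) :=
  isExternalWatchmanRoute_of_subset_triangle (convex_convexHull ℝ _)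
    ((finite_range _).isClosed_convexHull ℝ) cross_corners_pos
    (subset_convexHull ℝ _ ⟨Fin.last (k + 4), vertex_add_four k⟩) (convexHull_vertex_subset k)

lemma dist_eq_of_sq {p q : E2} {d : ℝ} (hd : 0 ≤ d)
    (h : (p 0 - q 0) ^ 2 + (p 1 - q 1) ^ 2 = d ^ 2) : dist p q = d := by
  rw [EuclideanSpace.dist_eq, Fin.sum_univ_two, Real.dist_eq, Real.dist_eq, sq_abs, sq_abs, h,
    Real.sqrt_sq hd]

lemma two_mul_dist_corners_lt_perimeter (k : ℕ) :
    2 * dist leftCorner rightCorner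
      < ∑ i : Fin (k + 5), dist (vertex k i) (vertex k ↑(i + 1)) := by
  have hbase : dist leftCorner rightCorner = 88 :=
    dist_eq_of_sq (by norm_num) (by norm_num [leftCorner, rightCorner])
  have hbottom : dist (graphPt basin (-40)) (graphPt basin 40) = 80 :=
    dist_eq_of_sq (by norm_num) (by norm_num [basin_neg])
  have hright : dist (graphPt basin 40) apex = 50 :=
    dist_eq_of_sq (by norm_num) (by norm_num [basin_forty])
  have hleft : dist apex (graphPt basin (-40)) = 50 :=
    dist_eq_of_sq (by norm_num) (by norm_num [basin_neg, basin_forty])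
  have h := dist_add_dist_add_dist_le_sum (vertex k) (k + 3)
  rw [vertex_add_four, vertex_of_le (Nat.zero_le _), vertex_of_le le_rfl, abscissa_zero,
    abscissa_add_three, hbottom, hright, hleft] at h
  refine lt_of_lt_of_le ?_ h
  norm_num [hbase]

end Construction

/-- For every `n ≥ 5` there is a convex polygon with `n` vertices (in strictly
convex position, listed counterclockwise) with all interior angles strictly
obtuse, admitting an external watchman route strictly shorter than its
perimeter. -/
theorem obtuse_polygon_perimeter_not_optimal (n : ℕ) (hn : 5 ≤ n) :
    haveI : NeZero n := ⟨by omega⟩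
    ∃ v : Fin n → E2,
      (∀ i : Fin n, v i ∉ convexHull ℝ (v '' {j | j ≠ i})) ∧
      (∀ i : Fin n, 0 < cross (v (i + 1) - v i) (v (i + 2) - v (i + 1))) ∧
      (∀ i : Fin n, Real.pi / 2 < EuclideanGeometry.angle (v (i - 1)) (v i) (v (i + 1))) ∧
      (∃ γ : ℝ → E2, ContinuousOn γ (Set.Icc 0 1) ∧ γ 0 = γ 1 ∧
        Disjoint (γ '' Set.Icc 0 1) (interior (convexHull ℝ (Set.range v))) ∧
        (∀ q ∈ frontier (convexHull ℝ (Set.range v)), ∃ t ∈ Set.Icc (0 : ℝ) 1,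
          Disjoint (segment ℝ (γ t) q) (interior (convexHull ℝ (Set.range v)))) ∧
        eVariationOn γ (Set.Icc 0 1) <
          ENNReal.ofReal (∑ i : Fin n, ‖v (i + 1) - v i‖)) := by
  obtain ⟨k, rfl⟩ := Nat.exists_eq_add_of_le' hn
  have hccw := isCcwPolygon_vertex k
  obtain ⟨hcont, hloop, hdisj, hvis⟩ := isExternalWatchmanRoute_vertex k
  refine ⟨fun i => vertex k i, hccw.notMem_convexHull,
    fun i => hccw i (i + 1) (i + 2) (sbtw_add_one_add_two i), fun i => ?_,
    backAndForth leftCorner rightCorner, hcont, hloop, hdisj, hvis, ?_⟩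
  · have hangle := pi_div_two_lt_angle_vertex k (i - 1)
    rwa [fin_add_two, sub_add_cancel] at hangle
  · refine (eVariationOn_backAndForth_le _ _).trans_lt ?_
    rw [ENNReal.ofReal_lt_ofReal_iff_of_nonneg (by positivity)]
    simpa only [dist_eq_norm'] using two_mul_dist_corners_lt_perimeter k

end
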